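/- arXiv:1910.09529 — 2 statements merged into one kernel-verified Lean document; each statement's English description precedes it below -/
import Mathlib

section
/- Let f : ℝ^d → ℝ be convex and differentiable, x* a minimizer of f with f* = f(x*), and let (x^k)_{k≥0} in ℝ^d and (λ_k)_{k≥0} with λ_k > 0 satisfy, for all k ≥ 0, x^{k+1} = x^k − λ_k∇f(x^k), and for all k ≥ 1 the two stepsize conditions 2λ_k‖∇f(x^k) − ∇f(x^{k−1})‖ ≤ ‖x^k − x^{k−1}‖ and λ_{k+1}² ≤ (1 + θ_k)λ_k², where θ_k = λ_k/λ_{k−1}. Define D = ‖x¹ − x*‖² + (1/2)‖x¹ − x⁰‖² + 2λ₁θ₁(f(x⁰) − f*). Then for every k ≥ 1, each weight w_i = λ_i(1+θ_i) − λ_{i+1}θ_{i+1} (1 ≤ i ≤ k−1) is nonnegative, and ‖x^{k+1} − x*‖² + (1/2)‖x^{k+1} − x^k‖² + 2λ_k(1+θ_k)(f(x^k) − f*) + 2·Σ_{i=1}^{k−1} w_i (f(x^i) − f*) ≤ D. -/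
open scoped RealInnerProductSpace BigOperators

/-!
Write `g`, `h` for subgradients at two consecutive iterates `y`, `p`, with stepsizes `l`, `m`.
Expanding `‖y - l • g - z‖²` and using the subgradient inequality at `z`, all that is lost in one
step is `l² ‖g‖²`. Since `‖g‖² = ⟪g, g - h⟫ + ⟪g, h⟫`, the first stepsize condition controls the
part with `⟪g, g - h⟫` by the lengths of the last two steps, while `m ⟪g, h⟫ = ⟪g, p - y⟫` is at
most the decrease `f p - f y`. The resulting inequality telescopes, and the second stepsize
condition is exactly nonnegativity of the weights left over by the telescoping.
-/

theorem sub_mul_div_nonneg_of_sq_le {K : Type*} [Field K] [LinearOrder K] [IsStrictOrderedRing K]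
    {a b t : K} (ha : 0 < a) (h : b ^ 2 ≤ t * a ^ 2) : 0 ≤ a * t - b * (b / a) := by
  rw [sub_nonneg, ← mul_div_assoc, div_le_iff₀ ha]
  linarith

theorem add_sum_Icc_sub_le_of_forall_add_le {G : Type*} [AddCommGroup G] [PartialOrder G]
    [IsOrderedAddMonoid G] {a u v : ℕ → G} (h : ∀ n, a (n + 1) + u (n + 1) ≤ a n + v n) (n : ℕ) :
    a (n + 1) + u (n + 1) + ∑ i ∈ Finset.Icc 1 n, (u i - v i) ≤ a 0 + v 0 := by
  induction n with
  | zero => simpa using h 0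
  | succ n ih =>
    rw [Finset.sum_Icc_succ_top (by omega)]
    calc a (n + 2) + u (n + 2) + (∑ i ∈ Finset.Icc 1 n, (u i - v i) + (u (n + 1) - v (n + 1)))
        ≤ a (n + 1) + v (n + 1)
            + (∑ i ∈ Finset.Icc 1 n, (u i - v i) + (u (n + 1) - v (n + 1))) := by
          gcongr ?_ + _
          exact h (n + 1)
      _ = a (n + 1) + u (n + 1) + ∑ i ∈ Finset.Icc 1 n, (u i - v i) := by abel
      _ ≤ a 0 + v 0 := ih

section InnerProductSpace

variable {E : Type*} [NormedAddCommGroup E] [InnerProductSpace ℝ E]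

/-- `g` is a subgradient of `f` at `x`: the affine function through `(x, f x)` with slope `g`
minorizes `f` everywhere. The gradient of a differentiable convex function is one. -/
def IsSubgradientAt (f : E → ℝ) (g x : E) : Prop :=
  ∀ y, f x + ⟪g, y - x⟫ ≤ f y

theorem three_halves_mul_sq_le_of_two_mul_norm_sub_le {g h : E} {l r : ℝ} (hl : 0 ≤ l)
    (hr : 2 * l * ‖g - h‖ ≤ r) :
    3 / 2 * (l * ‖g‖) ^ 2 ≤ 1 / 2 * r ^ 2 + 2 * l ^ 2 * ⟪g, h⟫ := by
  have hsplit : ‖g‖ ^ 2 = ⟪g, g - h⟫ + ⟪g, h⟫ := by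
    rw [inner_sub_right, real_inner_self_eq_norm_sq, sub_add_cancel]
  have hchange : 2 * l ^ 2 * ⟪g, g - h⟫ ≤ 1 / 2 * (l * ‖g‖) ^ 2 + 1 / 2 * r ^ 2 :=
    calc 2 * l ^ 2 * ⟪g, g - h⟫
        ≤ 2 * l ^ 2 * (‖g‖ * ‖g - h‖) := by
          gcongr
          exact real_inner_le_norm g (g - h)
      _ = l * ‖g‖ * (2 * l * ‖g - h‖) := by ring
      _ ≤ l * ‖g‖ * r := by gcongr
      _ ≤ 1 / 2 * (l * ‖g‖) ^ 2 + 1 / 2 * r ^ 2 := by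
          linarith [two_mul_le_add_sq (l * ‖g‖) r]
  calc 3 / 2 * (l * ‖g‖) ^ 2
      = 2 * l ^ 2 * ‖g‖ ^ 2 - 1 / 2 * (l * ‖g‖) ^ 2 := by ring
    _ = 2 * l ^ 2 * ⟪g, g - h⟫ - 1 / 2 * (l * ‖g‖) ^ 2 + 2 * l ^ 2 * ⟪g, h⟫ := by
        rw [hsplit]; ring
    _ ≤ 1 / 2 * r ^ 2 + 2 * l ^ 2 * ⟪g, h⟫ := by linarith

namespace IsSubgradientAt

variable {f : E → ℝ} {g h y : E} {l m : ℝ}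

theorem norm_sub_smul_sub_sq_add_le (hg : IsSubgradientAt f g y) (hl : 0 ≤ l) (z : E) :
    ‖y - l • g - z‖ ^ 2 + 2 * l * (f y - f z) ≤ ‖y - z‖ ^ 2 + (l * ‖g‖) ^ 2 := by
  have hgap : f y - f z ≤ ⟪g, y - z⟫ := by
    have hz := hg z
    rw [← neg_sub y z, inner_neg_right] at hz
    linarith
  have hexpand : ‖y - l • g - z‖ ^ 2 = ‖y - z‖ ^ 2 - 2 * l * ⟪g, y - z⟫ + (l * ‖g‖) ^ 2 := by
    rw [sub_right_comm, norm_sub_sq_real, inner_smul_right, real_inner_comm, norm_smul,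
      Real.norm_of_nonneg hl]
    ring
  have hscaled : 2 * l * (f y - f z) ≤ 2 * l * ⟪g, y - z⟫ := by gcongr
  linarith

theorem mul_inner_le_sub {p : E} (hg : IsSubgradientAt f g y) (hy : y = p - m • h) :
    m * ⟪g, h⟫ ≤ f p - f y := by
  have hp := hg p
  rw [show p - y = m • h by rw [hy, sub_sub_cancel], inner_smul_right] at hp
  linarith

theorem step_energy_le {p y' : E} (hg : IsSubgradientAt f g y) (hl : 0 ≤ l) (hm : 0 < m)
    (hy : y = p - m • h) (hy' : y' = y - l • g) (hstep : 2 * l * ‖g - h‖ ≤ ‖y - p‖) (z : E) :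
    ‖y' - z‖ ^ 2 + 1 / 2 * ‖y' - y‖ ^ 2 + 2 * l * (1 + l / m) * (f y - f z)
      ≤ ‖y - z‖ ^ 2 + 1 / 2 * ‖y - p‖ ^ 2 + 2 * l * (l / m) * (f p - f z) := by
  have hlength : ‖y' - y‖ = l * ‖g‖ := by
    rw [hy', sub_sub_cancel_left, norm_neg, norm_smul, Real.norm_of_nonneg hl]
  have hdist : ‖y' - z‖ ^ 2 + 2 * l * (f y - f z) ≤ ‖y - z‖ ^ 2 + (l * ‖g‖) ^ 2 :=
    hy' ▸ hg.norm_sub_smul_sub_sq_add_le hl z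
  have hgrad := three_halves_mul_sq_le_of_two_mul_norm_sub_le hl hstep
  have hdecrease : 2 * l ^ 2 * ⟪g, h⟫ ≤ 2 * l * (l / m) * (f p - f y) :=
    calc 2 * l ^ 2 * ⟪g, h⟫ = 2 * l * (l / m) * (m * ⟪g, h⟫) := by field_simp
      _ ≤ 2 * l * (l / m) * (f p - f y) := by
          gcongr
          exact hg.mul_inner_le_sub hy
  rw [hlength]
  linarith

end IsSubgradientAt

theorem adgd_telescoped_bound_general {f : E → ℝ} {x g : ℕ → E} {lam : ℕ → ℝ}
    (hsub : ∀ k, IsSubgradientAt f (g k) (x k)) (hlam : ∀ k, 0 < lam k)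
    (hupd : ∀ k, x (k + 1) = x k - lam k • g k)
    (hstep1 : ∀ k, 1 ≤ k → 2 * lam k * ‖g k - g (k - 1)‖ ≤ ‖x k - x (k - 1)‖)
    (hstep2 : ∀ k, 1 ≤ k → lam (k + 1) ^ 2 ≤ (1 + lam k / lam (k - 1)) * lam k ^ 2)
    (z : E) (k : ℕ) (hk : 1 ≤ k) :
    (∀ i ∈ Finset.Icc 1 (k - 1),
      0 ≤ lam i * (1 + lam i / lam (i - 1)) - lam (i + 1) * (lam (i + 1) / lam i)) ∧
    ‖x (k + 1) - z‖ ^ 2 + (1 / 2) * ‖x (k + 1) - x k‖ ^ 2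
        + 2 * lam k * (1 + lam k / lam (k - 1)) * (f (x k) - f z)
        + 2 * ∑ i ∈ Finset.Icc 1 (k - 1),
            (lam i * (1 + lam i / lam (i - 1)) - lam (i + 1) * (lam (i + 1) / lam i))
              * (f (x i) - f z)
      ≤ ‖x 1 - z‖ ^ 2 + (1 / 2) * ‖x 1 - x 0‖ ^ 2
        + 2 * lam 1 * (lam 1 / lam 0) * (f (x 0) - f z) := by
  refine ⟨fun i hi ↦ sub_mul_div_nonneg_of_sq_le (hlam i) (hstep2 i (Finset.mem_Icc.mp hi).1), ?_⟩
  obtain ⟨n, rfl⟩ := Nat.exists_eq_add_of_le' hk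
  have htelescope := add_sum_Icc_sub_le_of_forall_add_le
    (a := fun i ↦ ‖x (i + 1) - z‖ ^ 2 + (1 / 2) * ‖x (i + 1) - x i‖ ^ 2)
    (u := fun i ↦ 2 * lam i * (1 + lam i / lam (i - 1)) * (f (x i) - f z))
    (v := fun i ↦ 2 * lam (i + 1) * (lam (i + 1) / lam i) * (f (x i) - f z))
    (fun i ↦ (hsub (i + 1)).step_energy_le (hlam (i + 1)).le (hlam i) (hupd i) (hupd (i + 1))
      (hstep1 (i + 1) i.succ_pos) z) n
  refine Eq.trans_le ?_ htelescope
  rw [Finset.mul_sum]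
  congr 1
  exact Finset.sum_congr rfl fun i _ ↦ by ring

end InnerProductSpace

/-- Telescoped energy bound for adaptive gradient descent (inequality (7) of the paper),
together with nonnegativity of the weights. -/
theorem adgd_telescoped_bound {d : ℕ}
    (f : EuclideanSpace ℝ (Fin d) → ℝ)
    (f' : EuclideanSpace ℝ (Fin d) → EuclideanSpace ℝ (Fin d))
    (hdiff : ∀ x, HasGradientAt f (f' x) x)
    (hconv : ∀ x y, f x + ⟪f' x, y - x⟫ ≤ f y)
    (xstar : EuclideanSpace ℝ (Fin d))
    (hmin : ∀ y, f xstar ≤ f y)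
    (x : ℕ → EuclideanSpace ℝ (Fin d)) (lam : ℕ → ℝ)
    (hlam : ∀ k, 0 < lam k)
    (hupd : ∀ k, x (k + 1) = x k - lam k • f' (x k))
    (hstep1 : ∀ k, 1 ≤ k → 2 * lam k * ‖f' (x k) - f' (x (k - 1))‖ ≤ ‖x k - x (k - 1)‖)
    (hstep2 : ∀ k, 1 ≤ k → lam (k + 1) ^ 2 ≤ (1 + lam k / lam (k - 1)) * lam k ^ 2) :
    ∀ k, 1 ≤ k →
      (∀ i ∈ Finset.Icc 1 (k - 1),
        0 ≤ lam i * (1 + lam i / lam (i - 1)) - lam (i + 1) * (lam (i + 1) / lam i)) ∧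
      ‖x (k + 1) - xstar‖ ^ 2 + (1 / 2) * ‖x (k + 1) - x k‖ ^ 2
          + 2 * lam k * (1 + lam k / lam (k - 1)) * (f (x k) - f xstar)
          + 2 * ∑ i ∈ Finset.Icc 1 (k - 1),
              (lam i * (1 + lam i / lam (i - 1)) - lam (i + 1) * (lam (i + 1) / lam i))
                * (f (x i) - f xstar)
      ≤ ‖x 1 - xstar‖ ^ 2 + (1 / 2) * ‖x 1 - x 0‖ ^ 2
          + 2 * lam 1 * (lam 1 / lam 0) * (f (x 0) - f xstar) :=
  adgd_telescoped_bound_general (fun k ↦ hconv (x k)) hlam hupd hstep1 hstep2 xstar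
end

section
/- Let f : ℝ^d → ℝ be convex and differentiable, suppose ∇f is Lipschitz continuous on every compact subset of ℝ^d, and suppose f attains its minimum. Let (x^k)_{k≥0} and (λ_k)_{k≥0} be generated by adaptive gradient descent: λ₀ > 0; x¹ = x⁰ − λ₀∇f(x⁰); ∇f(x¹) ≠ ∇f(x⁰) and λ₁ = ‖x¹ − x⁰‖/(2‖∇f(x¹) − ∇f(x⁰)‖); and for every k ≥ 2, λ_k = min{√(1+θ_{k−1})·λ_{k−1}, ‖x^k − x^{k−1}‖/(2‖∇f(x^k) − ∇f(x^{k−1})‖)} when ∇f(x^k) ≠ ∇f(x^{k−1}) and λ_k = √(1+θ_{k−1})·λ_{k−1} otherwise, where θ_k = λ_k/λ_{k−1}, and x^{k+1} = x^k − λ_k∇f(x^k). Then the sequence (x^k) converges to a minimizer of f. -/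
open scoped RealInnerProductSpace

/-!
Write `θ n = lam n / lam (n - 1)`. For every minimizer `w` the energy
`‖x (n+1) - w‖² + ½ ‖x (n+1) - x n‖² + 2 lam n (1 + θ n) (f (x n) - f w)` is nonincreasing: the
secant bound on `lam` pays for the change of the gradient between two steps, and the growth bound
`lam (n+1) ≤ √(1 + θ n) lam n` makes the function-value terms telescope. Hence the iterates stay in
a ball, where `∇f` is Lipschitz, so the steps are bounded away from `0`. The energy actually drops
by `2 lam n` times the Bregman divergence from `x n` to `w`, which by cocoercivity dominates
`‖∇f (x n)‖²`; so the gradients tend to `0` and every cluster point is a minimizer. Only the first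
summand of the energy depends on the minimizer, hence `‖x n - z‖² - ‖x n - w‖²` converges for any
two cluster points `z`, `w`, which forces `z = w`.
-/

open Filter Topology Metric
open scoped NNReal

section ClusterPoints

theorem eq_of_mapClusterPt_of_tendsto {ι X : Type*} [TopologicalSpace X] [T2Space X]
    {l : Filter ι} {u : ι → X} {y z : X} (hy : MapClusterPt y l u) (hz : Tendsto u l (𝓝 z)) :
    y = z :=
  eq_of_nhds_neBot (ClusterPt.mono hy hz)

variable {ι X : Type*} [MetricSpace X] {l : Filter ι} {u : ι → X}

theorem eq_of_mapClusterPt_of_tendsto_dist_sq_sub {z w : X} {c : ℝ} (hz : MapClusterPt z l u)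
    (hw : MapClusterPt w l u)
    (h : Tendsto (fun n => dist (u n) z ^ 2 - dist (u n) w ^ 2) l (𝓝 c)) : z = w := by
  have hcont : Continuous fun y => dist y z ^ 2 - dist y w ^ 2 := by fun_prop
  have hcz : dist z z ^ 2 - dist z w ^ 2 = c :=
    eq_of_mapClusterPt_of_tendsto (hz.tendsto_comp (hcont.tendsto z)) h
  have hcw : dist w z ^ 2 - dist w w ^ 2 = c :=
    eq_of_mapClusterPt_of_tendsto (hw.tendsto_comp (hcont.tendsto w)) h
  rw [dist_self, dist_comm] at hcw
  rw [dist_self] at hcz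
  exact dist_eq_zero.1 (pow_eq_zero_iff two_ne_zero |>.1 (by linarith))

/-- A variant of Opial's lemma in which the squared distances converge only up to a perturbation `a`
common to all cluster points. -/
theorem exists_tendsto_of_tendsto_dist_sq_add [l.NeBot] {K : Set X} (hK : IsCompact K)
    (huK : ∀ n, u n ∈ K) {a : ι → ℝ}
    (h : ∀ w, MapClusterPt w l u → ∃ c, Tendsto (fun n => dist (u n) w ^ 2 + a n) l (𝓝 c)) :
    ∃ z, MapClusterPt z l u ∧ Tendsto u l (𝓝 z) := by
  obtain ⟨z, -, hz⟩ : ∃ z ∈ K, MapClusterPt z l u :=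
    hK.exists_mapClusterPt (tendsto_principal.2 (.of_forall huK))
  refine ⟨z, hz, hK.tendsto_nhds_of_unique_mapClusterPt (.of_forall huK) fun w _ hw => ?_⟩
  obtain ⟨c, hc⟩ := h w hw
  obtain ⟨c', hc'⟩ := h z hz
  exact eq_of_mapClusterPt_of_tendsto_dist_sq_sub hw hz
    ((hc.sub hc').congr fun n => add_sub_add_right_eq_sub _ _ _)

end ClusterPoints

theorem locallyLipschitz_of_forall_isCompact {X Y : Type*} [PseudoMetricSpace X]
    [WeaklyLocallyCompactSpace X] [PseudoMetricSpace Y] {g : X → Y}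
    (h : ∀ K, IsCompact K → ∃ C : ℝ, ∀ x ∈ K, ∀ y ∈ K, dist (g x) (g y) ≤ C * dist x y) :
    LocallyLipschitz g := fun x => by
  obtain ⟨K, hK, hKx⟩ := exists_compact_mem_nhds x
  obtain ⟨C, hC⟩ := h K hK
  exact ⟨C.toNNReal, K, hKx, .of_dist_le' hC⟩

section GradientStep

variable {E : Type*} [NormedAddCommGroup E] [InnerProductSpace ℝ E] {f : E → ℝ} {g : E → E}

theorem eq_zero_of_hasGradientAt_of_forall_le [CompleteSpace E] {v w : E} (h : HasGradientAt f v w)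
    (hw : ∀ y, f w ≤ f y) : v = 0 := by
  have hlocal : IsLocalMin f w := .of_forall hw
  simpa using hlocal.hasFDerivAt_eq_zero h.hasFDerivAt

/-- The Bregman divergence of `f` from `x` to `y`, where `g` is a field of (sub)gradients of `f`.
It measures how much the energy of the iteration drops in one step. -/
def bregmanDiv (f : E → ℝ) (g : E → E) (y x : E) : ℝ :=
  f y - f x - ⟪g x, y - x⟫

theorem bregmanDiv_nonneg (hconv : ∀ x y, f x + ⟪g x, y - x⟫ ≤ f y) (y x : E) :
    0 ≤ bregmanDiv f g y x := by
  unfold bregmanDiv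
  linarith [hconv x y]

theorem inner_sub_le_bregmanDiv (hconv : ∀ x y, f x + ⟪g x, y - x⟫ ≤ f y) (x y w : E) :
    ⟪g x - g y, y - w⟫ ≤ bregmanDiv f g w x := by
  have hxy := hconv x y
  have hyw := hconv y w
  have hx : ⟪g x, y - w⟫ = ⟪g x, y - x⟫ - ⟪g x, w - x⟫ := by
    rw [← inner_sub_right, sub_sub_sub_cancel_right]
  have hy : ⟪g y, y - w⟫ = -⟪g y, w - y⟫ := by rw [← inner_neg_right, neg_sub]
  rw [bregmanDiv, inner_sub_left]
  linarith

/-- Cocoercivity, obtained by testing convexity at `w + (g x - g w) / (2 L)`. The constant is half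
the optimal one, but no integration along segments is needed. -/
theorem norm_sub_sq_div_le_bregmanDiv (hconv : ∀ x y, f x + ⟪g x, y - x⟫ ≤ f y) {w x : E} {L : ℝ≥0}
    (hL : 0 < L) (hlip : LipschitzOnWith L g (closedBall w ‖x - w‖)) :
    ‖g x - g w‖ ^ 2 / (4 * L) ≤ bregmanDiv f g w x := by
  have hw_mem : w ∈ closedBall w ‖x - w‖ := mem_closedBall_self (norm_nonneg _)
  set v : E := g x - g w
  set t : ℝ := 1 / (2 * L) with ht
  have ht_pos : 0 < t := by positivity
  have hnorm : ‖w + t • v - w‖ = t * ‖v‖ := by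
    rw [add_sub_cancel_left, norm_smul, Real.norm_of_nonneg ht_pos.le]
  have hmem : w + t • v ∈ closedBall w ‖x - w‖ := by
    have hv : ‖v‖ ≤ L * ‖x - w‖ := hlip.norm_sub_le (mem_closedBall_iff_norm.2 le_rfl) hw_mem
    rw [mem_closedBall_iff_norm, hnorm]
    calc t * ‖v‖ ≤ t * (L * ‖x - w‖) := by gcongr
      _ = ‖x - w‖ / 2 := by rw [ht]; field_simp
      _ ≤ ‖x - w‖ := half_le_self (norm_nonneg _)
  have hgrad : ⟪g (w + t • v) - g w, v⟫ ≤ ‖v‖ ^ 2 / 2 :=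
    calc ⟪g (w + t • v) - g w, v⟫ ≤ ‖g (w + t • v) - g w‖ * ‖v‖ := real_inner_le_norm _ _
      _ ≤ L * (t * ‖v‖) * ‖v‖ := by
        gcongr
        exact hnorm ▸ hlip.norm_sub_le hmem hw_mem
      _ = ‖v‖ ^ 2 / 2 := by rw [ht]; field_simp
  have htest : t * ⟪g x - g (w + t • v), v⟫ ≤ bregmanDiv f g w x := by
    simpa only [add_sub_cancel_left, inner_smul_right] using
      inner_sub_le_bregmanDiv hconv x (w + t • v) w
  have hsplit : ⟪g x - g (w + t • v), v⟫ = ‖v‖ ^ 2 - ⟪g (w + t • v) - g w, v⟫ := by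
    rw [← real_inner_self_eq_norm_sq, ← inner_sub_left]
    congr 1
    simp only [v]
    abel
  calc ‖v‖ ^ 2 / (4 * L) = t * (‖v‖ ^ 2 - ‖v‖ ^ 2 / 2) := by rw [ht]; field_simp; ring
    _ ≤ t * ⟪g x - g (w + t • v), v⟫ := by rw [hsplit]; gcongr
    _ ≤ bregmanDiv f g w x := htest

theorem norm_sub_smul_sub_sq (x v w : E) (b : ℝ) :
    ‖x - b • v - w‖ ^ 2 = ‖x - w‖ ^ 2 + 2 * b * ⟪v, w - x⟫ + ‖b • v‖ ^ 2 := by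
  rw [sub_right_comm, norm_sub_sq_real, inner_smul_right, real_inner_comm, ← neg_sub w x,
    inner_neg_right]
  ring

theorem norm_step_sq_le (hconv : ∀ x y, f x + ⟪g x, y - x⟫ ≤ f y) {x₀ x₁ : E} {a b : ℝ}
    (ha : 0 < a) (hb : 0 < b) (hx₁ : x₁ = x₀ - a • g x₀)
    (hsecant : 2 * b * ‖g x₁ - g x₀‖ ≤ ‖x₁ - x₀‖) :
    3 / 2 * ‖b • g x₁‖ ^ 2 ≤ 1 / 2 * ‖x₁ - x₀‖ ^ 2 + 2 * b * (b / a) * (f x₀ - f x₁) := by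
  have hprev : g x₀ = a⁻¹ • (x₀ - x₁) := by
    rw [hx₁, sub_sub_cancel, inv_smul_smul₀ ha.ne']
  have hsplit : ‖b • g x₁‖ ^ 2
      = b * ⟪g x₁ - g x₀, b • g x₁⟫ + b * (b / a) * ⟪g x₁, x₀ - x₁⟫ := by
    rw [inner_sub_left, hprev, ← real_inner_self_eq_norm_sq]
    simp only [inner_smul_right, real_inner_comm (g x₁)]
    field_simp
    ring
  have hchange : 2 * (b * ⟪g x₁ - g x₀, b • g x₁⟫)
      ≤ 1 / 2 * ‖x₁ - x₀‖ ^ 2 + 1 / 2 * ‖b • g x₁‖ ^ 2 :=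
    calc 2 * (b * ⟪g x₁ - g x₀, b • g x₁⟫)
        ≤ 2 * (b * (‖g x₁ - g x₀‖ * ‖b • g x₁‖)) := by gcongr; exact real_inner_le_norm _ _
      _ = 2 * b * ‖g x₁ - g x₀‖ * ‖b • g x₁‖ := by ring
      _ ≤ ‖x₁ - x₀‖ * ‖b • g x₁‖ := by gcongr
      _ ≤ _ := by linarith [two_mul_le_add_sq ‖x₁ - x₀‖ ‖b • g x₁‖]
  have hdecrease : b * (b / a) * ⟪g x₁, x₀ - x₁⟫ ≤ b * (b / a) * (f x₀ - f x₁) := by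
    gcongr
    linarith [hconv x₁ x₀]
  linarith

theorem energy_step_le (hconv : ∀ x y, f x + ⟪g x, y - x⟫ ≤ f y) {x₀ x₁ x₂ : E} {a b : ℝ}
    (ha : 0 < a) (hb : 0 < b) (hx₁ : x₁ = x₀ - a • g x₀) (hx₂ : x₂ = x₁ - b • g x₁)
    (hsecant : 2 * b * ‖g x₁ - g x₀‖ ≤ ‖x₁ - x₀‖) (w : E) :
    ‖x₂ - w‖ ^ 2 + 1 / 2 * ‖x₂ - x₁‖ ^ 2 + 2 * b * (1 + b / a) * (f x₁ - f w)
        + 2 * b * bregmanDiv f g w x₁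
      ≤ ‖x₁ - w‖ ^ 2 + 1 / 2 * ‖x₁ - x₀‖ ^ 2 + 2 * b * (b / a) * (f x₀ - f w) := by
  have hdisp : ‖x₂ - x₁‖ = ‖b • g x₁‖ := by rw [hx₂, sub_sub_cancel_left, norm_neg]
  have hinner : 2 * b * ⟪g x₁, w - x₁⟫ = 2 * b * (f w - f x₁ - bregmanDiv f g w x₁) := by
    rw [bregmanDiv, sub_sub_cancel]
  rw [hdisp, hx₂, norm_sub_smul_sub_sq, hinner]
  linarith [norm_step_sq_le hconv ha hb hx₁ hsecant]

end GradientStep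

section SecantStep

variable {E : Type*} [NormedAddCommGroup E] {g : E → E} {x y : E}

/-- Half the reciprocal of the Lipschitz constant of `g` observed between `x` and `y`, the cap that
adaptive gradient descent puts on its steps. It takes the junk value `0` when `g x = g y`. -/
noncomputable def secantStep (g : E → E) (x y : E) : ℝ :=
  ‖y - x‖ / (2 * ‖g y - g x‖)

theorem secantStep_pos (h : g y ≠ g x) : 0 < secantStep g x y := by
  have hg : 0 < ‖g y - g x‖ := norm_sub_pos_iff.2 h
  have hxy : 0 < ‖y - x‖ := norm_sub_pos_iff.2 (ne_of_apply_ne g h)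
  unfold secantStep
  positivity

theorem le_secantStep_iff (h : g y ≠ g x) {b : ℝ} :
    b ≤ secantStep g x y ↔ 2 * b * ‖g y - g x‖ ≤ ‖y - x‖ := by
  have hg : 0 < ‖g y - g x‖ := norm_sub_pos_iff.2 h
  rw [secantStep, le_div_iff₀ (by positivity), ← mul_assoc, mul_comm b]

theorem one_div_two_mul_le_secantStep {L : ℝ≥0} (hL : 0 < L) {K : Set E}
    (hlip : LipschitzOnWith L g K) (hx : x ∈ K) (hy : y ∈ K) (h : g y ≠ g x) :
    1 / (2 * (L : ℝ)) ≤ secantStep g x y := by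
  rw [le_secantStep_iff h]
  calc 2 * (1 / (2 * (L : ℝ))) * ‖g y - g x‖
      ≤ 2 * (1 / (2 * (L : ℝ))) * (L * ‖y - x‖) := by gcongr; exact hlip.norm_sub_le hy hx
    _ = ‖y - x‖ := by field_simp

end SecantStep

section AdaptiveGradientDescent

variable {E : Type*} [NormedAddCommGroup E] [InnerProductSpace ℝ E]

/-- `x` and `lam` are the iterates and step sizes of adaptive gradient descent for the gradient
field `g`, with arbitrary positive first two step sizes. The step rule is stated at index `k + 2`
to avoid subtraction. -/
structure IsAdaptiveGradientDescent (g : E → E) (x : ℕ → E) (lam : ℕ → ℝ) : Prop where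
  lam_zero_pos : 0 < lam 0
  lam_one_pos : 0 < lam 1
  iterate_succ : ∀ k, x (k + 1) = x k - lam k • g (x k)
  lam_of_ne : ∀ k, g (x (k + 2)) ≠ g (x (k + 1)) →
    lam (k + 2) = min (√(1 + lam (k + 1) / lam k) * lam (k + 1))
      (secantStep g (x (k + 1)) (x (k + 2)))
  lam_of_eq : ∀ k, g (x (k + 2)) = g (x (k + 1)) →
    lam (k + 2) = √(1 + lam (k + 1) / lam k) * lam (k + 1)

/-- The part of the Lyapunov function of adaptive gradient descent that depends on the minimizer
only through the minimum `m` of `f`. Index `n` refers to the step from `x (n + 1)` to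
`x (n + 2)`. -/
noncomputable def adgdResidual (f : E → ℝ) (m : ℝ) (x : ℕ → E) (lam : ℕ → ℝ) (n : ℕ) : ℝ :=
  1 / 2 * ‖x (n + 2) - x (n + 1)‖ ^ 2
    + 2 * lam (n + 1) * (1 + lam (n + 1) / lam n) * (f (x (n + 1)) - m)

/-- The Lyapunov function of adaptive gradient descent for the minimizer `w`; it is nonincreasing
in `n`. -/
noncomputable def adgdEnergy (f : E → ℝ) (w : E) (x : ℕ → E) (lam : ℕ → ℝ) (n : ℕ) : ℝ :=
  ‖x (n + 2) - w‖ ^ 2 + adgdResidual f (f w) x lam n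

namespace IsAdaptiveGradientDescent

variable {f : E → ℝ} {g : E → E} {x : ℕ → E} {lam : ℕ → ℝ} {w : E}

theorem lam_pos (h : IsAdaptiveGradientDescent g x lam) : ∀ k, 0 < lam k
  | 0 => h.lam_zero_pos
  | 1 => h.lam_one_pos
  | k + 2 => by
    have hk := h.lam_pos k
    have hk' := h.lam_pos (k + 1)
    by_cases hg : g (x (k + 2)) = g (x (k + 1))
    · rw [h.lam_of_eq k hg]
      positivity
    · rw [h.lam_of_ne k hg]
      exact lt_min (by positivity) (secantStep_pos hg)

theorem lam_le_sqrt_mul (h : IsAdaptiveGradientDescent g x lam) (k : ℕ) :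
    lam (k + 2) ≤ √(1 + lam (k + 1) / lam k) * lam (k + 1) := by
  by_cases hg : g (x (k + 2)) = g (x (k + 1))
  · exact (h.lam_of_eq k hg).le
  · exact (h.lam_of_ne k hg).trans_le (min_le_left _ _)

theorem two_mul_lam_mul_norm_sub_le (h : IsAdaptiveGradientDescent g x lam) (k : ℕ) :
    2 * lam (k + 2) * ‖g (x (k + 2)) - g (x (k + 1))‖ ≤ ‖x (k + 2) - x (k + 1)‖ := by
  by_cases hg : g (x (k + 2)) = g (x (k + 1))
  · simp [hg]
  · exact (le_secantStep_iff hg).1 ((h.lam_of_ne k hg).trans_le (min_le_right _ _))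

theorem lam_mul_div_le (h : IsAdaptiveGradientDescent g x lam) (k : ℕ) :
    lam (k + 2) * (lam (k + 2) / lam (k + 1)) ≤ lam (k + 1) * (1 + lam (k + 1) / lam k) := by
  have h₀ := h.lam_pos k
  have h₁ := h.lam_pos (k + 1)
  have h₂ := h.lam_pos (k + 2)
  rw [← mul_div_assoc, div_le_iff₀ h₁, ← sq]
  calc lam (k + 2) ^ 2 ≤ (√(1 + lam (k + 1) / lam k) * lam (k + 1)) ^ 2 := by
        gcongr
        exact h.lam_le_sqrt_mul k
    _ = lam (k + 1) * (1 + lam (k + 1) / lam k) * lam (k + 1) := by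
        rw [mul_pow, Real.sq_sqrt (by positivity)]
        ring

theorem lam_le_sqrt_mul_self (h : IsAdaptiveGradientDescent g x lam) (k : ℕ) :
    lam (k + 1) ≤ √(1 + lam (k + 1) / lam k) * lam (k + 1) := by
  have h₀ := h.lam_pos k
  have h₁ := h.lam_pos (k + 1)
  have hratio : 0 ≤ lam (k + 1) / lam k := by positivity
  exact le_mul_of_one_le_left h₁.le (Real.one_le_sqrt.2 (by linarith))

theorem min_le_lam (h : IsAdaptiveGradientDescent g x lam) {L : ℝ≥0} (hL : 0 < L) {K : Set E}
    (hlip : LipschitzOnWith L g K) (hxK : ∀ n, x (n + 2) ∈ K) (n : ℕ) :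
    min (lam 2) (1 / (2 * (L : ℝ))) ≤ lam (n + 2) := by
  induction n with
  | zero => exact min_le_left _ _
  | succ n ih =>
    have hgrow := ih.trans (h.lam_le_sqrt_mul_self (n + 1))
    by_cases hg : g (x (n + 3)) = g (x (n + 2))
    · exact hgrow.trans_eq (h.lam_of_eq (n + 1) hg).symm
    · rw [h.lam_of_ne (n + 1) hg]
      exact le_min hgrow ((min_le_right _ _).trans
        (one_div_two_mul_le_secantStep hL hlip (hxK n) (hxK (n + 1)) hg))

theorem residual_nonneg (h : IsAdaptiveGradientDescent g x lam) {m : ℝ} (hm : ∀ y, m ≤ f y)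
    (n : ℕ) : 0 ≤ adgdResidual f m x lam n := by
  have h₀ := h.lam_pos n
  have h₁ := h.lam_pos (n + 1)
  have hgap := sub_nonneg.2 (hm (x (n + 1)))
  unfold adgdResidual
  positivity

theorem energy_nonneg (h : IsAdaptiveGradientDescent g x lam) (hw : ∀ y, f w ≤ f y) (n : ℕ) :
    0 ≤ adgdEnergy f w x lam n :=
  add_nonneg (sq_nonneg _) (h.residual_nonneg hw n)

theorem energy_succ_add_le (h : IsAdaptiveGradientDescent g x lam)
    (hconv : ∀ x y, f x + ⟪g x, y - x⟫ ≤ f y) (hw : ∀ y, f w ≤ f y) (n : ℕ) :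
    adgdEnergy f w x lam (n + 1) + 2 * lam (n + 2) * bregmanDiv f g w (x (n + 2))
      ≤ adgdEnergy f w x lam n := by
  have hstep := energy_step_le hconv (h.lam_pos (n + 1)) (h.lam_pos (n + 2))
    (h.iterate_succ (n + 1)) (h.iterate_succ (n + 2)) (h.two_mul_lam_mul_norm_sub_le n) w
  have htelescope := mul_le_mul_of_nonneg_right (h.lam_mul_div_le n)
    (sub_nonneg.2 (hw (x (n + 1))))
  simp only [adgdEnergy, adgdResidual, add_assoc, Nat.reduceAdd] at hstep ⊢
  linarith

theorem energy_antitone (h : IsAdaptiveGradientDescent g x lam)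
    (hconv : ∀ x y, f x + ⟪g x, y - x⟫ ≤ f y) (hw : ∀ y, f w ≤ f y) :
    Antitone (adgdEnergy f w x lam) := by
  refine antitone_nat_of_succ_le fun n => ?_
  have hlam := h.lam_pos (n + 2)
  have hbreg := bregmanDiv_nonneg hconv w (x (n + 2))
  have hdrop : 0 ≤ 2 * lam (n + 2) * bregmanDiv f g w (x (n + 2)) := by positivity
  linarith [h.energy_succ_add_le hconv hw n]

theorem exists_tendsto_energy (h : IsAdaptiveGradientDescent g x lam)
    (hconv : ∀ x y, f x + ⟪g x, y - x⟫ ≤ f y) (hw : ∀ y, f w ≤ f y) :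
    ∃ c, Tendsto (adgdEnergy f w x lam) atTop (𝓝 c) :=
  ⟨_, tendsto_atTop_ciInf (h.energy_antitone hconv hw)
    ⟨0, Set.forall_mem_range.2 (h.energy_nonneg hw)⟩⟩

theorem iterate_mem_closedBall (h : IsAdaptiveGradientDescent g x lam)
    (hconv : ∀ x y, f x + ⟪g x, y - x⟫ ≤ f y) (hw : ∀ y, f w ≤ f y) (n : ℕ) :
    x (n + 2) ∈ closedBall w √(adgdEnergy f w x lam 0) := by
  rw [mem_closedBall_iff_norm]
  refine Real.le_sqrt_of_sq_le ?_
  calc ‖x (n + 2) - w‖ ^ 2 ≤ adgdEnergy f w x lam n :=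
        le_add_of_nonneg_right (h.residual_nonneg hw n)
    _ ≤ adgdEnergy f w x lam 0 := h.energy_antitone hconv hw n.zero_le

theorem tendsto_lam_mul_bregmanDiv (h : IsAdaptiveGradientDescent g x lam)
    (hconv : ∀ x y, f x + ⟪g x, y - x⟫ ≤ f y) (hw : ∀ y, f w ≤ f y) :
    Tendsto (fun n => lam (n + 2) * bregmanDiv f g w (x (n + 2))) atTop (𝓝 0) := by
  obtain ⟨c, hc⟩ := h.exists_tendsto_energy hconv hw
  have hdrop : Tendsto (fun n => adgdEnergy f w x lam n - adgdEnergy f w x lam (n + 1)) atTop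
      (𝓝 0) := by
    simpa using hc.sub ((tendsto_add_atTop_iff_nat 1).2 hc)
  have hnonneg : ∀ n, 0 ≤ lam (n + 2) * bregmanDiv f g w (x (n + 2)) := fun n =>
    mul_nonneg (h.lam_pos _).le (bregmanDiv_nonneg hconv _ _)
  refine squeeze_zero hnonneg (fun n => ?_) hdrop
  linarith [h.energy_succ_add_le hconv hw n, hnonneg n]

theorem tendsto_gradient (h : IsAdaptiveGradientDescent g x lam)
    (hconv : ∀ x y, f x + ⟪g x, y - x⟫ ≤ f y) (hw : ∀ y, f w ≤ f y) (hgw : g w = 0) {L : ℝ≥0}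
    (hL : 0 < L) (hlip : LipschitzOnWith L g (closedBall w √(adgdEnergy f w x lam 0))) :
    Tendsto (fun n => g (x (n + 2))) atTop (𝓝 0) := by
  have hmem := h.iterate_mem_closedBall hconv hw
  set c : ℝ := min (lam 2) (1 / (2 * L))
  have hc_pos : 0 < c := lt_min (h.lam_pos 2) (by positivity)
  have hbound : ∀ n, ‖g (x (n + 2))‖ ^ 2
      ≤ 4 * L / c * (lam (n + 2) * bregmanDiv f g w (x (n + 2))) := fun n => by
    have hcoco : ‖g (x (n + 2))‖ ^ 2 / (4 * L) ≤ bregmanDiv f g w (x (n + 2)) := by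
      simpa only [hgw, sub_zero] using norm_sub_sq_div_le_bregmanDiv hconv hL
        (hlip.mono (closedBall_subset_closedBall (mem_closedBall_iff_norm.1 (hmem n))))
    calc ‖g (x (n + 2))‖ ^ 2
        = 4 * L / c * (c * (‖g (x (n + 2))‖ ^ 2 / (4 * L))) := by field_simp
      _ ≤ 4 * L / c * (lam (n + 2) * bregmanDiv f g w (x (n + 2))) := by
        have hlam := (h.lam_pos (n + 2)).le
        gcongr
        exact h.min_le_lam hL hlip hmem n
  have hsq : Tendsto (fun n => ‖g (x (n + 2))‖ ^ 2) atTop (𝓝 0) := by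
    refine squeeze_zero (fun n => sq_nonneg _) hbound ?_
    simpa using (h.tendsto_lam_mul_bregmanDiv hconv hw).const_mul (4 * L / c)
  refine tendsto_zero_iff_norm_tendsto_zero.2 ?_
  simpa using hsq.sqrt

end IsAdaptiveGradientDescent

theorem adgd_converges_to_minimizer_general [ProperSpace E] {f : E → ℝ} {f' : E → E}
    {x : ℕ → E} {lam : ℕ → ℝ} (hdiff : ∀ x, HasGradientAt f (f' x) x)
    (hconv : ∀ x y, f x + ⟪f' x, y - x⟫ ≤ f y) (hlip : LocallyLipschitz f')
    (hattains : ∃ xstar, ∀ y, f xstar ≤ f y) (h : IsAdaptiveGradientDescent f' x lam) :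
    ∃ z, (∀ y, f z ≤ f y) ∧ Tendsto x atTop (𝓝 z) := by
  obtain ⟨s, hs⟩ := hattains
  have hball := isCompact_closedBall s √(adgdEnergy f s x lam 0)
  obtain ⟨L, hL⟩ := hlip.locallyLipschitzOn.exists_lipschitzOnWith_of_compact hball
  have hgrad : Tendsto (fun n => f' (x (n + 2))) atTop (𝓝 0) :=
    h.tendsto_gradient hconv hs (eq_zero_of_hasGradientAt_of_forall_le (hdiff s) hs)
      (add_pos_of_nonneg_of_pos L.2 one_pos) (hL.weaken le_self_add)
  have hcluster : ∀ w, MapClusterPt w atTop (fun n => x (n + 2)) → ∀ y, f w ≤ f y := by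
    intro w hw y
    have hw0 : f' w = 0 := eq_of_mapClusterPt_of_tendsto
      (hw.continuousAt_comp hlip.continuous.continuousAt) hgrad
    simpa [hw0] using hconv w y
  obtain ⟨z, hz, hxz⟩ : ∃ z, MapClusterPt z atTop (fun n => x (n + 2)) ∧
      Tendsto (fun n => x (n + 2)) atTop (𝓝 z) := by
    refine exists_tendsto_of_tendsto_dist_sq_add hball (h.iterate_mem_closedBall hconv hs)
      (a := adgdResidual f (f s) x lam) fun w hw => ?_
    have hfw : f w = f s := le_antisymm (hcluster w hw s) (hs w)
    simp only [dist_eq_norm, ← hfw]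
    exact h.exists_tendsto_energy hconv (hcluster w hw)
  exact ⟨z, hcluster z hz, (tendsto_add_atTop_iff_nat 2).1 hxz⟩

end AdaptiveGradientDescent

/-- Theorem 2 (convergence of the iterates) of "Adaptive gradient descent without descent":
for a convex function with locally Lipschitz gradient attaining its minimum, the iterates of
adaptive gradient descent converge to a minimizer. -/
theorem adgd_converges_to_minimizer {d : ℕ}
    (f : EuclideanSpace ℝ (Fin d) → ℝ)
    (f' : EuclideanSpace ℝ (Fin d) → EuclideanSpace ℝ (Fin d))
    (hdiff : ∀ x, HasGradientAt f (f' x) x)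
    (hconv : ∀ x y, f x + ⟪f' x, y - x⟫ ≤ f y)
    (hlocLip : ∀ K : Set (EuclideanSpace ℝ (Fin d)), IsCompact K →
      ∃ LK : ℝ, 0 ≤ LK ∧ ∀ x ∈ K, ∀ y ∈ K, ‖f' x - f' y‖ ≤ LK * ‖x - y‖)
    (hattains : ∃ xstar, ∀ y, f xstar ≤ f y)
    (x : ℕ → EuclideanSpace ℝ (Fin d)) (lam : ℕ → ℝ)
    (hl0 : 0 < lam 0)
    (hupd : ∀ k, x (k + 1) = x k - lam k • f' (x k))
    (hne1 : f' (x 1) ≠ f' (x 0))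
    (hl1 : lam 1 = ‖x 1 - x 0‖ / (2 * ‖f' (x 1) - f' (x 0)‖))
    (hrec : ∀ k, 2 ≤ k →
      (f' (x k) ≠ f' (x (k - 1)) →
        lam k = min (Real.sqrt (1 + lam (k - 1) / lam (k - 2)) * lam (k - 1))
          (‖x k - x (k - 1)‖ / (2 * ‖f' (x k) - f' (x (k - 1))‖))) ∧
      (f' (x k) = f' (x (k - 1)) →
        lam k = Real.sqrt (1 + lam (k - 1) / lam (k - 2)) * lam (k - 1))) :
    ∃ z, (∀ y, f z ≤ f y) ∧ Filter.Tendsto x Filter.atTop (nhds z) := by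
  have hlip : LocallyLipschitz f' := locallyLipschitz_of_forall_isCompact fun K hK =>
    (hlocLip K hK).imp fun C hC => by simpa only [dist_eq_norm] using hC.2
  exact adgd_converges_to_minimizer_general hdiff hconv hlip hattains
    ⟨hl0, hl1 ▸ secantStep_pos hne1, hupd, fun k => (hrec (k + 2) (Nat.le_add_left 2 k)).1,
      fun k => (hrec (k + 2) (Nat.le_add_left 2 k)).2⟩
end
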